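/- With the IX parameter set to γ = 1/√n, with probability at least 1-δ the Gibbs posterior Q̂_n = argmax_{Q ∈ Δ_Π} { ṽ_n(Q) - KL(Q‖P)/(2γn) } satisfies, simultaneously for every comparator distribution Q* ∈ Δ_Π, v(Q*) - v(Q̂_n) ≤ (2·C_γ(Q*) + KL(Q*‖P) + log(1/δ))/√n. -/

import Mathlib

/-!
The proof combines the Donsker–Varadhan inequality with two exponential moment bounds for the IX
estimator, one in each direction, both at the scale `2γ`.

* Upwards (`lintegral_exp_ix_upper`): `E exp (2γ (r̃(π) - v(π))) ≤ 1`. The shift `γ` in the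
  denominator, through `2z/(2+z) ≤ log (1+z)`, replaces the exponential by an affine function of
  the reward.
* Downwards (`lintegral_exp_ix_lower`): `E exp (2γ (v(π) - 2γ C_γ(π) - r̃(π))) ≤ 1`. Here
  `exp (-u) ≤ 1 - u + u²/2` for `u ≥ 0`; the bias `γ C_γ(π)` and the second moment (at most
  `C_γ(π)`) each contribute `γ C_γ(π)`.

By independence and Tonelli (`lintegral_mixture_le_one`), the `P`-mixtures `Z₁`, `Z₂` of the
corresponding exponentials of the whole dataset have expectation at most one. The
Donsker–Varadhan inequality is applied to `Qhat` with the upward exponent and to the comparator `Q`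
with the downward one; adding the optimality of `Qhat` cancels `KL(Qhat‖P)` and leaves
`√n (v(Q) - v(Qhat)) ≤ 2 C_γ(Q) + KL(Q‖P) + (log Z₁ + log Z₂)/2`.

A union bound over the two directions would produce `log (2/δ)`. Instead, only the sum
`Z₁ + Z₂` is controlled: Markov's inequality gives `Z₁ + Z₂ < 2/δ` with probability at least
`1 - δ`, and then `Z₁ Z₂ ≤ 1/δ²` by the inequality of arithmetic and geometric means. This event is
measurable and is contained in the (possibly non-measurable) event of the theorem.
-/

open MeasureTheory ProbabilityTheory

/-- A stochastic contextual bandit instance: context distribution `ν`, behavior policy `μb`,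
reward kernel `rker` supported on `[0,1]`, and mean reward function `r`. -/
structure CBSetup (𝓧 𝓐 : Type*) [MeasurableSpace 𝓧] [Fintype 𝓐] [MeasurableSpace 𝓐] where
  /-- the context distribution -/
  ν : Measure 𝓧
  ν_prob : IsProbabilityMeasure ν
  /-- the behavior policy `μ(a|x)` -/
  μb : 𝓧 → 𝓐 → ℝ
  μb_nonneg : ∀ x a, 0 ≤ μb x a
  μb_sum_one : ∀ x, ∑ a, μb x a = 1
  μb_meas : ∀ a, Measurable fun x => μb x a
  /-- the reward kernel `p(·|x,a)` -/
  rker : 𝓧 → 𝓐 → Measure ℝ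
  rker_prob : ∀ x a, IsProbabilityMeasure (rker x a)
  rker_supp : ∀ x a, rker x a (Set.Icc (0:ℝ) 1)ᶜ = 0
  rker_meas : ∀ a, Measurable fun x => rker x a
  /-- the mean reward `r(x,a)` -/
  r : 𝓧 → 𝓐 → ℝ
  r_def : ∀ x a, r x a = ∫ ρ, ρ ∂(rker x a)
  r_meas : ∀ a, Measurable fun x => r x a

variable {𝓧 𝓐 : Type*} [MeasurableSpace 𝓧] [Fintype 𝓐] [MeasurableSpace 𝓐]
  [MeasurableSingletonClass 𝓐]

/-- The law of a single observation `(X, A, R)` with `X ~ ν`, `A ~ μ(·|X)`, `R ~ p(·|X,A)`. -/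
noncomputable def obsLaw (S : CBSetup 𝓧 𝓐) : Measure (𝓧 × 𝓐 × ℝ) :=
  S.ν.bind fun x => Measure.sum fun a =>
    ENNReal.ofReal (S.μb x a) • (S.rker x a).map fun ρ => (x, a, ρ)

/-- The law of the i.i.d. dataset `(X_t, A_t, R_t)_{t=1}^n`. -/
noncomputable def dataLaw (S : CBSetup 𝓧 𝓐) (n : ℕ) : Measure (Fin n → 𝓧 × 𝓐 × ℝ) :=
  Measure.pi fun _ : Fin n => obsLaw S

/-- A (stochastic, measurable) policy: a map from contexts to distributions over actions. -/
def IsPolicy (π : 𝓧 → 𝓐 → ℝ) : Prop :=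
  (∀ x a, 0 ≤ π x a) ∧ (∀ x, ∑ a, π x a = 1) ∧ (∀ a, Measurable fun x => π x a)

/-- The value `v(π) = E[Σ_a π(a|X) r(X,a)]` of a policy. -/
noncomputable def pval (S : CBSetup 𝓧 𝓐) (π : 𝓧 → 𝓐 → ℝ) : ℝ :=
  ∫ x, ∑ a, π x a * S.r x a ∂S.ν

/-- The smoothed coverage ratio `C_γ(π) = E[Σ_a π(a|X) r(X,a)/(μ(a|X)+γ)]`. -/
noncomputable def covγ (S : CBSetup 𝓧 𝓐) (γ : ℝ) (π : 𝓧 → 𝓐 → ℝ) : ℝ :=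
  ∫ x, ∑ a, π x a * S.r x a / (S.μb x a + γ) ∂S.ν

/-- The IX reward estimate `r̃(π) = π(A|X) R / (μ(A|X) + γ)` for one observation `ω = (X,A,R)`. -/
noncomputable def ixTerm (S : CBSetup 𝓧 𝓐) (γ : ℝ) (π : 𝓧 → 𝓐 → ℝ) (ω : 𝓧 × 𝓐 × ℝ) : ℝ :=
  π ω.1 ω.2.1 * ω.2.2 / (S.μb ω.1 ω.2.1 + γ)

/-- The IX value estimator `ṽ_n(π) = (1/n) Σ_t π(A_t|X_t) R_t / (μ(A_t|X_t) + γ)`. -/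
noncomputable def ixEst (S : CBSetup 𝓧 𝓐) (γ : ℝ) {n : ℕ} (π : 𝓧 → 𝓐 → ℝ)
    (D : Fin n → 𝓧 × 𝓐 × ℝ) : ℝ :=
  (∑ t, ixTerm S γ π (D t)) / n

/-- The relative entropy `KL(Q‖P) = ∫ log (dQ/dP) dQ`, as a real number (meaningful whenever
`Q ≪ P` and the log-density is `Q`-integrable, i.e. whenever the KL divergence is finite). -/
noncomputable def klReal {Θ : Type*} [MeasurableSpace Θ] (Q P : Measure Θ) : ℝ :=
  ∫ θ, Real.log ((Q.rnDeriv P θ).toReal) ∂Q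

/-- `KL(Q‖P)` is finite: `Q ≪ P` and the log-density is `Q`-integrable. -/
def KLFinite {Θ : Type*} [MeasurableSpace Θ] (Q P : Measure Θ) : Prop :=
  Q ≪ P ∧ Integrable (fun θ => Real.log ((Q.rnDeriv P θ).toReal)) Q

set_option linter.unusedSectionVars false

/-! ### The law of one observation -/

lemma measurable_obsKernel (S : CBSetup 𝓧 𝓐) :
    Measurable fun x => Measure.sum fun a =>
      ENNReal.ofReal (S.μb x a) • (S.rker x a).map fun ρ => (x, a, ρ) := by
  refine Measure.measurable_of_measurable_coe _ fun s hs => ?_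
  simp only [Measure.sum_apply _ hs, tsum_fintype, Measure.smul_apply, smul_eq_mul]
  refine Finset.measurable_sum _ fun a _ => (S.μb_meas a).ennreal_ofReal.mul ?_
  let κ : Kernel 𝓧 ℝ := ⟨fun x => S.rker x a, S.rker_meas a⟩
  have : IsMarkovKernel κ := ⟨fun x => S.rker_prob x a⟩
  have hm : Measurable fun q : 𝓧 × ℝ => (q.1, a, q.2) := by fun_prop
  have h := Kernel.measurable_kernel_prodMk_left (κ := κ) (hm hs)
  have heq : ∀ x, ((S.rker x a).map fun ρ => (x, a, ρ)) s =
      κ x (Prod.mk x ⁻¹' ((fun q : 𝓧 × ℝ => (q.1, a, q.2)) ⁻¹' s)) := fun x => by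
    rw [Measure.map_apply (by fun_prop) hs]
    rfl
  simpa only [heq] using h

lemma lintegral_obsLaw (S : CBSetup 𝓧 𝓐) {f : 𝓧 × 𝓐 × ℝ → ENNReal} (hf : Measurable f) :
    ∫⁻ ω, f ω ∂(obsLaw S) =
      ∫⁻ x, ∑ a, ENNReal.ofReal (S.μb x a) * ∫⁻ ρ, f (x, a, ρ) ∂(S.rker x a) ∂S.ν := by
  rw [obsLaw, Measure.lintegral_bind (measurable_obsKernel S).aemeasurable hf.aemeasurable]
  refine lintegral_congr fun x => ?_
  rw [lintegral_sum_measure, tsum_fintype]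
  refine Finset.sum_congr rfl fun a _ => ?_
  rw [lintegral_smul_measure, lintegral_map hf (by fun_prop), smul_eq_mul]

lemma isProbabilityMeasure_obsLaw (S : CBSetup 𝓧 𝓐) : IsProbabilityMeasure (obsLaw S) := by
  have := S.ν_prob
  have := S.rker_prob
  refine ⟨?_⟩
  rw [← lintegral_one, lintegral_obsLaw S measurable_const]
  have h : ∀ x, ∑ a, ENNReal.ofReal (S.μb x a) = 1 := fun x => by
    rw [← ENNReal.ofReal_sum_of_nonneg fun a _ => S.μb_nonneg x a, S.μb_sum_one,
      ENNReal.ofReal_one]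
  simp [h]

lemma ae_reward_mem (S : CBSetup 𝓧 𝓐) (x : 𝓧) (a : 𝓐) :
    ∀ᵐ ρ ∂(S.rker x a), ρ ∈ Set.Icc (0 : ℝ) 1 :=
  S.rker_supp x a

lemma integrable_reward (S : CBSetup 𝓧 𝓐) (x : 𝓧) (a : 𝓐) :
    Integrable (fun ρ : ℝ => ρ) (S.rker x a) := by
  have := S.rker_prob x a
  refine Integrable.of_bound aestronglyMeasurable_id 1 ?_
  filter_upwards [ae_reward_mem S x a] with ρ hρ
  rw [Real.norm_eq_abs, abs_le]
  constructor <;> linarith [hρ.1, hρ.2]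

lemma r_mem (S : CBSetup 𝓧 𝓐) (x : 𝓧) (a : 𝓐) : 0 ≤ S.r x a ∧ S.r x a ≤ 1 := by
  have := S.rker_prob x a
  rw [S.r_def]
  constructor
  · refine integral_nonneg_of_ae ?_
    filter_upwards [ae_reward_mem S x a] with ρ hρ using hρ.1
  · have h := integral_mono_ae (integrable_reward S x a) (integrable_const (1 : ℝ))
      (by filter_upwards [ae_reward_mem S x a] with ρ hρ using hρ.2)
    simpa using h

/-- One-observation moment bound: a pointwise bound on `μ(a|x) F(x,a,ρ)` that is affine in the
reward `ρ` is integrated exactly, because the reward only enters through its mean. -/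
lemma lintegral_obsLaw_le (S : CBSetup 𝓧 𝓐) {F : 𝓧 × 𝓐 × ℝ → ℝ} (hF : Measurable F)
    (hF0 : ∀ ω, 0 ≤ F ω) (β : 𝓧 → 𝓐 → ℝ)
    (hβi : Integrable (fun x => ∑ a, β x a * S.r x a) S.ν)
    (h : ∀ x a, ∀ ρ ∈ Set.Icc (0 : ℝ) 1, S.μb x a * F (x, a, ρ) ≤ S.μb x a + β x a * ρ) :
    ∫⁻ ω, ENNReal.ofReal (F ω) ∂(obsLaw S) ≤
      ENNReal.ofReal (1 + ∫ x, ∑ a, β x a * S.r x a ∂S.ν) := by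
  have := S.ν_prob
  rw [lintegral_obsLaw S hF.ennreal_ofReal]
  have hae : ∀ x a, ∀ᵐ ρ ∂(S.rker x a), 0 ≤ S.μb x a + β x a * ρ := fun x a => by
    filter_upwards [ae_reward_mem S x a] with ρ hρ
    exact (mul_nonneg (S.μb_nonneg x a) (hF0 _)).trans (h x a ρ hρ)
  have hint : ∀ x a, Integrable (fun ρ => S.μb x a + β x a * ρ) (S.rker x a) := fun x a => by
    have := S.rker_prob x a
    exact (integrable_const _).add ((integrable_reward S x a).const_mul _)
  have hval : ∀ x a, ∫ ρ, (S.μb x a + β x a * ρ) ∂(S.rker x a) = S.μb x a + β x a * S.r x a :=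
    fun x a => by
      have := S.rker_prob x a
      rw [integral_add (integrable_const _) ((integrable_reward S x a).const_mul _),
        integral_const_mul, S.r_def]
      simp
  have hnn : ∀ x a, 0 ≤ S.μb x a + β x a * S.r x a := fun x a => by
    rw [← hval]
    exact integral_nonneg_of_ae (hae x a)
  have hone : ∀ x, ∑ a, (S.μb x a + β x a * S.r x a) = 1 + ∑ a, β x a * S.r x a := fun x => by
    rw [Finset.sum_add_distrib, S.μb_sum_one]
  have hx : ∀ x, ∑ a, ENNReal.ofReal (S.μb x a) *
      ∫⁻ ρ, ENNReal.ofReal (F (x, a, ρ)) ∂(S.rker x a) ≤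
      ENNReal.ofReal (1 + ∑ a, β x a * S.r x a) := fun x => by
    rw [← hone, ENNReal.ofReal_sum_of_nonneg fun a _ => hnn x a]
    refine Finset.sum_le_sum fun a _ => ?_
    rw [← hval, ofReal_integral_eq_lintegral_ofReal (hint x a) (hae x a),
      ← lintegral_const_mul' _ _ ENNReal.ofReal_ne_top]
    refine lintegral_mono_ae ?_
    filter_upwards [ae_reward_mem S x a] with ρ hρ
    rw [← ENNReal.ofReal_mul (S.μb_nonneg x a)]
    exact ENNReal.ofReal_le_ofReal (h x a ρ hρ)
  refine (lintegral_mono hx).trans_eq ?_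
  have hi : Integrable (fun x => 1 + ∑ a, β x a * S.r x a) S.ν := (integrable_const _).add hβi
  have hi0 : ∀ x, 0 ≤ 1 + ∑ a, β x a * S.r x a := fun x => by
    rw [← hone]
    exact Finset.sum_nonneg fun a _ => hnn x a
  rw [← ofReal_integral_eq_lintegral_ofReal hi (ae_of_all _ hi0),
    integral_add (integrable_const _) hβi]
  simp

/-! ### Scalar inequalities -/

lemma exp_neg_le_quadratic {x : ℝ} (hx : 0 ≤ x) : Real.exp (-x) ≤ 1 - x + x ^ 2 / 2 := by
  have h1 := Real.quadratic_le_exp_of_nonneg hx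
  have h2 : Real.exp (-x) * Real.exp x = 1 := by rw [← Real.exp_add]; simp
  have h3 : 0 ≤ 1 - x + x ^ 2 / 2 := by nlinarith [sq_nonneg (x - 1)]
  have h4 : 1 ≤ (1 - x + x ^ 2 / 2) * Real.exp x := by
    nlinarith [mul_le_mul_of_nonneg_left h1 h3, sq_nonneg (x ^ 2)]
  exact le_of_mul_le_mul_right (h2.trans_le h4) (Real.exp_pos x)

/-- The implicit-exploration bias makes the upward exponential moment affine in the reward:
this is `2z/(2+z) ≤ log (1+z)` at `z = 2γy/m`, together with `y ≤ 1`. -/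
lemma mul_exp_ix_le {m γ y : ℝ} (hm : 0 ≤ m) (hγ : 0 < γ) (hy0 : 0 ≤ y) (hy1 : y ≤ 1) :
    m * Real.exp (2 * γ * (y / (m + γ))) ≤ m + 2 * γ * y := by
  rcases hm.eq_or_lt with rfl | hm
  · simp; positivity
  have h := Real.le_log_one_add_of_nonneg (x := 2 * γ * y / m) (by positivity)
  have h1 : 2 * γ * (y / (m + γ)) ≤ 2 * (2 * γ * y / m) / (2 * γ * y / m + 2) := by
    have : 2 * (2 * γ * y / m) / (2 * γ * y / m + 2) = 2 * γ * (y / (m + γ * y)) := by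
      field_simp
      ring
    rw [this]
    gcongr
    nlinarith
  have h2 : Real.exp (2 * γ * (y / (m + γ))) ≤ 1 + 2 * γ * y / m := by
    rw [← Real.le_log_iff_exp_le (by positivity)]
    exact h1.trans h
  calc m * Real.exp (2 * γ * (y / (m + γ))) ≤ m * (1 + 2 * γ * y / m) := by gcongr
    _ = m + 2 * γ * y := by field_simp

/-- Downward counterpart of `mul_exp_ix_le`: the second-order term of `exp (-u)` and the bias of
the estimator each contribute `2 * γ ^ 2 * y / (m + γ)`. -/
lemma mul_exp_neg_ix_le {m γ y : ℝ} (hm : 0 ≤ m) (hγ : 0 < γ) (hy0 : 0 ≤ y) (hy1 : y ≤ 1) :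
    m * Real.exp (-(2 * γ * (y / (m + γ)))) ≤
      m + (-(2 * γ * y) + 4 * γ ^ 2 * (y / (m + γ))) := by
  have hmg : 0 < m + γ := by positivity
  set u := y / (m + γ) with hu
  have hu0 : 0 ≤ u := by positivity
  have hyu : y = u * (m + γ) := by rw [hu]; field_simp
  have h := exp_neg_le_quadratic (x := 2 * γ * u) (by positivity)
  have h2 : m * u ≤ 1 := by nlinarith
  have h3 : 0 ≤ 2 * γ ^ 2 * u * (1 - m * u) :=
    mul_nonneg (by positivity) (by linarith)
  have h4 := mul_le_mul_of_nonneg_left h hm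
  rw [hyu]
  nlinarith

/-! ### The Donsker–Varadhan inequality -/

/-- Donsker–Varadhan inequality. -/
lemma integral_le_klReal_add_log {Θ : Type*} [MeasurableSpace Θ] {P Q : Measure Θ}
    [IsProbabilityMeasure P] [IsProbabilityMeasure Q] (hQ : KLFinite Q P) {g : Θ → ℝ}
    (hgQ : Integrable g Q) (hgP : Integrable (fun θ => Real.exp (g θ)) P) :
    ∫ θ, g θ ∂Q ≤ klReal Q P + Real.log (∫ θ, Real.exp (g θ) ∂P) := by
  have h1 := integral_llr_tilted_right hQ.1 hgQ hgP hQ.2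
  have := isProbabilityMeasure_tilted hgP
  have hac : Q ≪ P.tilted g := hQ.1.trans (absolutelyContinuous_tilted hgP)
  have h2 := InformationTheory.toReal_klDiv_of_measure_eq hac (by simp)
  have h3 : klReal Q P = ∫ x, llr Q P x ∂Q := rfl
  have h4 : 0 ≤ (InformationTheory.klDiv Q (P.tilted g)).toReal := ENNReal.toReal_nonneg
  linarith

/-! ### Boundedness and measurability -/

lemma policy_le_one {π : 𝓧 → 𝓐 → ℝ} (h : IsPolicy π) (x : 𝓧) (a : 𝓐) : π x a ≤ 1 := by
  rw [← h.2.1 x]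
  exact Finset.single_le_sum (fun b _ => h.1 x b) (Finset.mem_univ a)

lemma integrable_pval (S : CBSetup 𝓧 𝓐) {π : 𝓧 → 𝓐 → ℝ} (h : IsPolicy π) :
    Integrable (fun x => ∑ a, π x a * S.r x a) S.ν := by
  have := S.ν_prob
  refine integrable_finsetSum _ fun a _ => Integrable.of_bound
    ((h.2.2 a).mul (S.r_meas a)).aestronglyMeasurable 1 (ae_of_all _ fun x => ?_)
  have := r_mem S x a
  rw [Real.norm_of_nonneg (mul_nonneg (h.1 x a) this.1)]
  exact mul_le_one₀ (policy_le_one h x a) this.1 this.2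

lemma integrable_covγ (S : CBSetup 𝓧 𝓐) {γ : ℝ} (hγ : 0 < γ) {π : 𝓧 → 𝓐 → ℝ}
    (h : IsPolicy π) :
    Integrable (fun x => ∑ a, π x a * S.r x a / (S.μb x a + γ)) S.ν := by
  have := S.ν_prob
  refine integrable_finsetSum _ fun a _ => Integrable.of_bound
    (((h.2.2 a).mul (S.r_meas a)).div
      ((S.μb_meas a).add_const γ)).aestronglyMeasurable (1 / γ) (ae_of_all _ fun x => ?_)
  have := r_mem S x a
  have h0 := mul_nonneg (h.1 x a) this.1
  have hm := S.μb_nonneg x a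
  rw [Real.norm_of_nonneg (by positivity)]
  gcongr
  · exact mul_le_one₀ (policy_le_one h x a) this.1 this.2
  · linarith

lemma pval_mem (S : CBSetup 𝓧 𝓐) {π : 𝓧 → 𝓐 → ℝ} (h : IsPolicy π) :
    0 ≤ pval S π ∧ pval S π ≤ 1 := by
  have := S.ν_prob
  have hpt : ∀ x, ∑ a, π x a * S.r x a ≤ 1 := fun x => by
    rw [← h.2.1 x]
    exact Finset.sum_le_sum fun a _ => mul_le_of_le_one_right (h.1 x a) (r_mem S x a).2
  constructor
  · exact integral_nonneg fun x =>
      Finset.sum_nonneg fun a _ => mul_nonneg (h.1 x a) (r_mem S x a).1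
  · simpa [pval] using integral_mono (integrable_pval S h) (integrable_const (1 : ℝ)) hpt

lemma covγ_mem (S : CBSetup 𝓧 𝓐) {γ : ℝ} (hγ : 0 < γ) {π : 𝓧 → 𝓐 → ℝ} (h : IsPolicy π) :
    0 ≤ covγ S γ π ∧ covγ S γ π ≤ 1 / γ := by
  have := S.ν_prob
  have hpt : ∀ x, ∑ a, π x a * S.r x a / (S.μb x a + γ) ≤ 1 / γ := fun x => by
    rw [← h.2.1 x, Finset.sum_div]
    refine Finset.sum_le_sum fun a _ => ?_
    have h1 := h.1 x a
    have hm := S.μb_nonneg x a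
    gcongr
    · exact mul_le_of_le_one_right h1 (r_mem S x a).2
    · linarith
  constructor
  · refine integral_nonneg fun x => Finset.sum_nonneg fun a _ => ?_
    have h1 := h.1 x a
    have hm := S.μb_nonneg x a
    have hr := (r_mem S x a).1
    positivity
  · simpa [covγ] using integral_mono (integrable_covγ S hγ h) (integrable_const (1 / γ)) hpt

lemma measurable_ixTerm (S : CBSetup 𝓧 𝓐) (γ : ℝ) {Θ : Type*} [MeasurableSpace Θ]
    {pf : Θ → 𝓧 → 𝓐 → ℝ} (hpfm : ∀ a, Measurable fun q : Θ × 𝓧 => pf q.1 q.2 a) :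
    Measurable fun q : Θ × (𝓧 × 𝓐 × ℝ) => ixTerm S γ (pf q.1) q.2 := by
  -- with the finite action coordinate moved last, measurability is checked action by action
  have h : Measurable fun q : (Θ × 𝓧 × ℝ) × 𝓐 =>
      ixTerm S γ (pf q.1.1) (q.1.2.1, q.2, q.1.2.2) := by
    refine measurable_from_prod_countable_left fun a => ?_
    simp only [ixTerm]
    have h1 := (hpfm a).comp (g := fun q : Θ × 𝓧 => pf q.1 q.2 a)
      (f := fun q : Θ × 𝓧 × ℝ => (q.1, q.2.1)) (by fun_prop)
    have h2 := (S.μb_meas a).comp (f := fun q : Θ × 𝓧 × ℝ => q.2.1) (by fun_prop)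
    exact (h1.mul (by fun_prop)).div (h2.add_const γ)
  exact h.comp (g := fun q : (Θ × 𝓧 × ℝ) × 𝓐 =>
      ixTerm S γ (pf q.1.1) (q.1.2.1, q.2, q.1.2.2))
    (f := fun q : Θ × (𝓧 × 𝓐 × ℝ) => ((q.1, q.2.1, q.2.2.2), q.2.2.1)) (by fun_prop)

lemma measurable_pval (S : CBSetup 𝓧 𝓐) {Θ : Type*} [MeasurableSpace Θ]
    {pf : Θ → 𝓧 → 𝓐 → ℝ} (hpfm : ∀ a, Measurable fun q : Θ × 𝓧 => pf q.1 q.2 a) :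
    Measurable fun θ => pval S (pf θ) := by
  have := S.ν_prob
  have h : Measurable fun q : Θ × 𝓧 => ∑ a, pf q.1 q.2 a * S.r q.2 a :=
    Finset.measurable_sum _ fun a _ => (hpfm a).mul ((S.r_meas a).comp measurable_snd)
  exact (h.stronglyMeasurable.integral_prod_right (ν := S.ν)).measurable

lemma measurable_covγ (S : CBSetup 𝓧 𝓐) (γ : ℝ) {Θ : Type*} [MeasurableSpace Θ]
    {pf : Θ → 𝓧 → 𝓐 → ℝ} (hpfm : ∀ a, Measurable fun q : Θ × 𝓧 => pf q.1 q.2 a) :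
    Measurable fun θ => covγ S γ (pf θ) := by
  have := S.ν_prob
  have h : Measurable fun q : Θ × 𝓧 => ∑ a, pf q.1 q.2 a * S.r q.2 a / (S.μb q.2 a + γ) :=
    Finset.measurable_sum _ fun a _ => ((hpfm a).mul ((S.r_meas a).comp measurable_snd)).div
      (((S.μb_meas a).comp measurable_snd).add_const γ)
  exact (h.stronglyMeasurable.integral_prod_right (ν := S.ν)).measurable

lemma measurable_ixTerm_snd (S : CBSetup 𝓧 𝓐) (γ : ℝ) {π : 𝓧 → 𝓐 → ℝ} (h : IsPolicy π) :
    Measurable (ixTerm S γ π) :=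
  (measurable_ixTerm S γ (Θ := Unit) (pf := fun _ => π)
    fun a => (h.2.2 a).comp measurable_snd).comp
    (measurable_const (a := ()) |>.prodMk measurable_id)

/-! ### Exponential moments of the IX estimator -/

lemma lintegral_exp_ix_upper (S : CBSetup 𝓧 𝓐) {γ : ℝ} (hγ : 0 < γ) {π : 𝓧 → 𝓐 → ℝ}
    (h : IsPolicy π) :
    ∫⁻ ω, ENNReal.ofReal (Real.exp (2 * γ * (ixTerm S γ π ω - pval S π))) ∂(obsLaw S) ≤ 1 := by
  have hm := measurable_ixTerm_snd S γ h
  have hint := integrable_pval S h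
  have hsum : ∀ x, ∑ a, 2 * γ * π x a * S.r x a = 2 * γ * ∑ a, π x a * S.r x a := fun x => by
    rw [Finset.mul_sum]; exact Finset.sum_congr rfl fun a _ => by ring
  have key := lintegral_obsLaw_le S (F := fun ω => Real.exp (2 * γ * ixTerm S γ π ω))
    (by fun_prop) (fun ω => (Real.exp_pos _).le) (fun x a => 2 * γ * π x a)
    (by simp only [hsum]; exact hint.const_mul _) (fun x a ρ hρ => by
      have := mul_exp_ix_le (S.μb_nonneg x a) hγ (mul_nonneg (h.1 x a) hρ.1)
        (mul_le_one₀ (policy_le_one h x a) hρ.1 hρ.2)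
      simp only [ixTerm]
      linarith)
  simp only [hsum] at key
  rw [integral_const_mul] at key
  change _ ≤ ENNReal.ofReal (1 + 2 * γ * pval S π) at key
  have hsplit : ∀ ω, ENNReal.ofReal (Real.exp (2 * γ * (ixTerm S γ π ω - pval S π))) =
      ENNReal.ofReal (Real.exp (-(2 * γ * pval S π))) *
        ENNReal.ofReal (Real.exp (2 * γ * ixTerm S γ π ω)) := fun ω => by
    rw [← ENNReal.ofReal_mul (Real.exp_pos _).le, ← Real.exp_add]
    congr 2; ring
  simp only [hsplit]
  rw [lintegral_const_mul' _ _ ENNReal.ofReal_ne_top]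
  refine (mul_le_mul_right key _).trans ?_
  rw [← ENNReal.ofReal_mul (Real.exp_pos _).le, ← ENNReal.ofReal_one]
  refine ENNReal.ofReal_le_ofReal ?_
  have h1 := Real.add_one_le_exp (2 * γ * pval S π)
  calc _ ≤ Real.exp (-(2 * γ * pval S π)) * Real.exp (2 * γ * pval S π) := by
        gcongr; linarith
    _ = 1 := by rw [← Real.exp_add]; simp

lemma lintegral_exp_ix_lower (S : CBSetup 𝓧 𝓐) {γ : ℝ} (hγ : 0 < γ) {π : 𝓧 → 𝓐 → ℝ}
    (h : IsPolicy π) :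
    ∫⁻ ω, ENNReal.ofReal (Real.exp (2 * γ * (pval S π - 2 * γ * covγ S γ π - ixTerm S γ π ω)))
      ∂(obsLaw S) ≤ 1 := by
  have hm := measurable_ixTerm_snd S γ h
  have hint := integrable_pval S h
  have hint' := integrable_covγ S hγ h
  have hsum : ∀ x, ∑ a, (-(2 * γ * π x a) + 4 * γ ^ 2 * (π x a / (S.μb x a + γ))) * S.r x a =
      -(2 * γ) * ∑ a, π x a * S.r x a +
        4 * γ ^ 2 * ∑ a, π x a * S.r x a / (S.μb x a + γ) := fun x => by
    rw [Finset.mul_sum, Finset.mul_sum, ← Finset.sum_add_distrib]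
    exact Finset.sum_congr rfl fun a _ => by ring
  have key := lintegral_obsLaw_le S (F := fun ω => Real.exp (-(2 * γ * ixTerm S γ π ω)))
    (by fun_prop) (fun ω => (Real.exp_pos _).le)
    (fun x a => -(2 * γ * π x a) + 4 * γ ^ 2 * (π x a / (S.μb x a + γ)))
    (by simp only [hsum]; exact (hint.const_mul _).add (hint'.const_mul _)) (fun x a ρ hρ => by
      have := mul_exp_neg_ix_le (S.μb_nonneg x a) hγ (mul_nonneg (h.1 x a) hρ.1)
        (mul_le_one₀ (policy_le_one h x a) hρ.1 hρ.2)
      simp only [ixTerm]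
      refine this.trans_eq ?_
      ring)
  simp only [hsum] at key
  rw [integral_add (hint.const_mul _) (hint'.const_mul _), integral_const_mul,
    integral_const_mul] at key
  change _ ≤ ENNReal.ofReal (1 + (-(2 * γ) * pval S π + 4 * γ ^ 2 * covγ S γ π)) at key
  set b := 2 * γ * (pval S π - 2 * γ * covγ S γ π) with hb
  have hsplit : ∀ ω, ENNReal.ofReal
      (Real.exp (2 * γ * (pval S π - 2 * γ * covγ S γ π - ixTerm S γ π ω))) =
      ENNReal.ofReal (Real.exp b) *
        ENNReal.ofReal (Real.exp (-(2 * γ * ixTerm S γ π ω))) := fun ω => by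
    rw [← ENNReal.ofReal_mul (Real.exp_pos _).le, ← Real.exp_add]
    congr 2; rw [hb]; ring
  simp only [hsplit]
  rw [lintegral_const_mul' _ _ ENNReal.ofReal_ne_top]
  refine (mul_le_mul_right key _).trans ?_
  rw [← ENNReal.ofReal_mul (Real.exp_pos _).le, ← ENNReal.ofReal_one]
  refine ENNReal.ofReal_le_ofReal ?_
  have h1 := Real.add_one_le_exp (-b)
  calc _ ≤ Real.exp b * Real.exp (-b) := by
        gcongr; linarith
    _ = 1 := by rw [← Real.exp_add]; simp

/-- Tensorization and Fubini: if `φ θ` has one-observation exponential moment at most one for each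
`θ`, then the `P`-mixture of the products over the dataset has expectation at most one. -/
lemma lintegral_mixture_le_one (S : CBSetup 𝓧 𝓐) {Θ : Type*} [MeasurableSpace Θ]
    (P : Measure Θ) [IsProbabilityMeasure P] (n : ℕ) {φ : Θ → 𝓧 × 𝓐 × ℝ → ℝ}
    (hφ : Measurable fun q : Θ × (𝓧 × 𝓐 × ℝ) => φ q.1 q.2)
    (h : ∀ θ, ∫⁻ ω, ENNReal.ofReal (Real.exp (φ θ ω)) ∂(obsLaw S) ≤ 1) :
    (Measurable fun D : Fin n → 𝓧 × 𝓐 × ℝ =>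
      ∫⁻ θ, ENNReal.ofReal (Real.exp (∑ t, φ θ (D t))) ∂P) ∧
    ∫⁻ D, ∫⁻ θ, ENNReal.ofReal (Real.exp (∑ t, φ θ (D t))) ∂P ∂(dataLaw S n) ≤ 1 := by
  have := isProbabilityMeasure_obsLaw S
  have : IsProbabilityMeasure (dataLaw S n) := by unfold dataLaw; infer_instance
  have hm : Measurable fun q : (Fin n → 𝓧 × 𝓐 × ℝ) × Θ =>
      ENNReal.ofReal (Real.exp (∑ t, φ q.2 (q.1 t))) := by
    refine (Finset.measurable_sum _ fun t _ => ?_).exp.ennreal_ofReal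
    exact hφ.comp (f := fun q : (Fin n → 𝓧 × 𝓐 × ℝ) × Θ => (q.2, q.1 t)) (by fun_prop)
  refine ⟨hm.lintegral_prod_right', ?_⟩
  rw [lintegral_lintegral_swap hm.aemeasurable]
  refine (lintegral_mono (g := fun _ => 1) fun θ => ?_).trans_eq (by simp)
  have hφθ : Measurable (φ θ) := hφ.comp measurable_prodMk_left
  have hind := iIndepFun_pi (μ := fun _ : Fin n => obsLaw S)
    (X := fun _ ω => ENNReal.ofReal (Real.exp (φ θ ω)))
    (fun _ => hφθ.exp.ennreal_ofReal.aemeasurable)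
  have hprod := lintegral_prod_eq_prod_lintegral_of_indepFun Finset.univ _ hind
    (fun t => (hφθ.exp.ennreal_ofReal).comp (measurable_pi_apply t))
  have hexp : ∀ D : Fin n → 𝓧 × 𝓐 × ℝ, ENNReal.ofReal (Real.exp (∑ t, φ θ (D t))) =
      ∏ t, ENNReal.ofReal (Real.exp (φ θ (D t))) := fun D => by
    rw [Real.exp_sum, ENNReal.ofReal_prod_of_nonneg fun t _ => (Real.exp_pos _).le]
  simp only [hexp]
  refine hprod.trans_le (Finset.prod_le_one' fun t _ => ?_)
  refine le_trans (le_of_eq ?_) (h θ)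
  exact (measurePreserving_eval (fun _ : Fin n => obsLaw S) t).lintegral_comp
    hφθ.exp.ennreal_ofReal

/-! ### The high-probability event and the regret bound -/

lemma measurable_ixEst (S : CBSetup 𝓧 𝓐) (γ : ℝ) {Θ : Type*} [MeasurableSpace Θ]
    {pf : Θ → 𝓧 → 𝓐 → ℝ} (hpfm : ∀ a, Measurable fun q : Θ × 𝓧 => pf q.1 q.2 a)
    {n : ℕ} (D : Fin n → 𝓧 × 𝓐 × ℝ) :
    Measurable fun θ => ixEst S γ (pf θ) D :=
  (Finset.measurable_sum _ fun t _ =>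
    (measurable_ixTerm S γ hpfm).comp (measurable_prodMk_right (y := D t))).div_const _

lemma abs_ixEst_le (S : CBSetup 𝓧 𝓐) {γ : ℝ} (hγ : 0 < γ) {π : 𝓧 → 𝓐 → ℝ} (h : IsPolicy π)
    {n : ℕ} (D : Fin n → 𝓧 × 𝓐 × ℝ) :
    |ixEst S γ π D| ≤ (∑ t, |(D t).2.2| / γ) / n := by
  rw [ixEst, abs_div, Nat.abs_cast]
  gcongr
  refine (Finset.abs_sum_le_sum_abs _ _).trans (Finset.sum_le_sum fun t _ => ?_)
  have h1 := h.1 (D t).1 (D t).2.1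
  have hm := S.μb_nonneg (D t).1 (D t).2.1
  have hmg : 0 < S.μb (D t).1 (D t).2.1 + γ := by positivity
  rw [ixTerm, abs_div, abs_mul, abs_of_nonneg h1, abs_of_pos hmg]
  gcongr
  · exact mul_le_of_le_one_left (abs_nonneg _) (policy_le_one h _ _)
  · linarith

lemma integrable_of_abs_le {Θ : Type*} [MeasurableSpace Θ] (Q : Measure Θ)
    [IsProbabilityMeasure Q] {g : Θ → ℝ} (hg : Measurable g) {B : ℝ} (hB : ∀ θ, |g θ| ≤ B) :
    Integrable g Q :=
  Integrable.of_bound hg.aestronglyMeasurable B (ae_of_all _ hB)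

lemma integrable_exp_of_abs_le {Θ : Type*} [MeasurableSpace Θ] (Q : Measure Θ)
    [IsProbabilityMeasure Q] {g : Θ → ℝ} (hg : Measurable g) {B : ℝ} (hB : ∀ θ, |g θ| ≤ B) :
    Integrable (fun θ => Real.exp (g θ)) Q :=
  Integrable.of_bound hg.exp.aestronglyMeasurable (Real.exp B) (ae_of_all _ fun θ => by
    rw [Real.norm_of_nonneg (Real.exp_pos _).le]
    exact Real.exp_le_exp.2 ((le_abs_self _).trans (hB θ)))

/-- Markov's inequality for the sum of two nonnegative variables of mean at most one. -/
lemma ofReal_one_sub_le_measure {Ω : Type*} [MeasurableSpace Ω] (μ : Measure Ω)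
    [IsProbabilityMeasure μ] {Z₁ Z₂ : Ω → ENNReal} (hm₁ : Measurable Z₁) (hm₂ : Measurable Z₂)
    (h₁ : ∫⁻ ω, Z₁ ω ∂μ ≤ 1) (h₂ : ∫⁻ ω, Z₂ ω ∂μ ≤ 1) {δ : ℝ} (hδ : 0 < δ) :
    ENNReal.ofReal (1 - δ) ≤ μ {ω | Z₁ ω + Z₂ ω < ENNReal.ofReal (2 / δ)} := by
  have hc : {ω | Z₁ ω + Z₂ ω < ENNReal.ofReal (2 / δ)} =
      {ω | ENNReal.ofReal (2 / δ) ≤ Z₁ ω + Z₂ ω}ᶜ := by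
    ext ω; simp
  have hpos : 0 < 2 / δ := by positivity
  have hM := meas_ge_le_lintegral_div (μ := μ) (hm₁.add hm₂).aemeasurable
    (ENNReal.ofReal_pos.2 hpos).ne' ENNReal.ofReal_ne_top
  have hsum : ∫⁻ ω, (Z₁ + Z₂) ω ∂μ ≤ ENNReal.ofReal 2 := by
    simp only [Pi.add_apply]
    rw [lintegral_add_left hm₁]
    refine (add_le_add h₁ h₂).trans_eq ?_
    norm_num
  have hM' : μ {ω | ENNReal.ofReal (2 / δ) ≤ Z₁ ω + Z₂ ω} ≤ ENNReal.ofReal δ := by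
    refine hM.trans ((ENNReal.div_le_div_right hsum _).trans_eq ?_)
    rw [← ENNReal.ofReal_div_of_pos hpos]
    congr 1
    field_simp
  have hms : MeasurableSet {ω | ENNReal.ofReal (2 / δ) ≤ Z₁ ω + Z₂ ω} :=
    measurableSet_le measurable_const (hm₁.add hm₂)
  rw [hc, prob_compl_eq_one_sub hms, ENNReal.ofReal_sub _ hδ.le, ENNReal.ofReal_one]
  exact tsub_le_tsub_left hM' 1

/-- AM–GM in logarithmic form; this is what keeps `log (1/δ)` free of a union-bound factor. -/
lemma log_add_log_le {z₁ z₂ δ : ℝ} (h₁ : 0 < z₁) (h₂ : 0 < z₂)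
    (h : z₁ + z₂ < 2 / δ) : Real.log z₁ + Real.log z₂ ≤ 2 * Real.log (1 / δ) := by
  have h3 : Real.log ((1 / δ) ^ 2) = 2 * Real.log (1 / δ) := by rw [Real.log_pow]; norm_num
  rw [← Real.log_mul h₁.ne' h₂.ne', ← h3]
  refine Real.log_le_log (by positivity) ?_
  have h4 : z₁ + z₂ ≤ 2 * (1 / δ) := by rw [← mul_one_div] at h; exact h.le
  nlinarith [sq_nonneg (z₁ - z₂), mul_self_le_mul_self (by positivity) h4]

/-- Theorem 2, second part: with `γ = 1/√n`, with probability at least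
`1-δ` the Gibbs posterior satisfies, simultaneously for every comparator distribution `Q*`
(with finite `KL(Q*‖P)`),
`v(Q*) - v(Qhat D) ≤ (2 C_γ(Q*) + KL(Q*‖P) + log(1/δ))/√n`. -/
theorem pac_bayes_piwo_ix_regret_tuned
    (S : CBSetup 𝓧 𝓐) {Θ : Type*} [MeasurableSpace Θ]
    (pf : Θ → 𝓧 → 𝓐 → ℝ) (hpf : ∀ θ, IsPolicy (pf θ))
    (hpfm : ∀ a, Measurable fun q : Θ × 𝓧 => pf q.1 q.2 a)
    {n : ℕ} (hn : 0 < n) (γ δ : ℝ) (hδ0 : 0 < δ) (hδ1 : δ < 1)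
    (hγdef : γ = (Real.sqrt n)⁻¹)
    (P : Measure Θ) (hP : IsProbabilityMeasure P)
    (Qhat : (Fin n → 𝓧 × 𝓐 × ℝ) → Measure Θ)
    (hQhat_prob : ∀ D, IsProbabilityMeasure (Qhat D))
    (hQhat_kl : ∀ D, KLFinite (Qhat D) P)
    (hQhat_max : ∀ D (Q : Measure Θ), IsProbabilityMeasure Q → KLFinite Q P →
      (∫ θ, ixEst S γ (pf θ) D ∂Q) - klReal Q P / (2 * γ * n) ≤
        (∫ θ, ixEst S γ (pf θ) D ∂(Qhat D)) - klReal (Qhat D) P / (2 * γ * n)) :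
    ENNReal.ofReal (1 - δ) ≤
      dataLaw S n {D : Fin n → 𝓧 × 𝓐 × ℝ |
        ∀ Q : Measure Θ, IsProbabilityMeasure Q → KLFinite Q P →
          (∫ θ, pval S (pf θ) ∂Q) - (∫ θ, pval S (pf θ) ∂(Qhat D)) ≤
            (2 * (∫ θ, covγ S γ (pf θ) ∂Q) + klReal Q P + Real.log (1 / δ)) /
              Real.sqrt n} := by
  have hs : 0 < Real.sqrt n := Real.sqrt_pos.2 (by exact_mod_cast hn)
  have hs2 : Real.sqrt n * Real.sqrt n = n := Real.mul_self_sqrt (Nat.cast_nonneg n)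
  have hγ : 0 < γ := hγdef ▸ inv_pos.2 hs
  have hsγ : γ * Real.sqrt n = 1 := by rw [hγdef]; field_simp
  set s := Real.sqrt n with hsdef
  have hn0 : (n : ℝ) ≠ 0 := by positivity
  have hγn : γ * n = s := by rw [← hs2, ← mul_assoc, hsγ, one_mul]
  have := isProbabilityMeasure_obsLaw S
  have : IsProbabilityMeasure (dataLaw S n) := by unfold dataLaw; infer_instance
  have hmix := measurable_ixTerm S γ hpfm
  have hmv := measurable_pval S hpfm
  have hmc := measurable_covγ S γ hpfm
  obtain ⟨hZ₁m, hZ₁⟩ := lintegral_mixture_le_one S P n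
    (φ := fun θ ω => 2 * γ * (ixTerm S γ (pf θ) ω - pval S (pf θ)))
    ((hmix.sub (hmv.comp measurable_fst)).const_mul _)
    (fun θ => lintegral_exp_ix_upper S hγ (hpf θ))
  obtain ⟨hZ₂m, hZ₂⟩ := lintegral_mixture_le_one S P n
    (φ := fun θ ω => 2 * γ * (pval S (pf θ) - 2 * γ * covγ S γ (pf θ) - ixTerm S γ (pf θ) ω))
    ((((hmv.comp measurable_fst).sub ((hmc.comp measurable_fst).const_mul _)).sub
      hmix).const_mul _)
    (fun θ => lintegral_exp_ix_lower S hγ (hpf θ))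
  refine (ofReal_one_sub_le_measure (dataLaw S n) hZ₁m hZ₂m hZ₁ hZ₂ hδ0).trans
    (measure_mono fun D hD => ?_)
  simp only [Set.mem_ofPred_eq] at hD ⊢
  intro Q hQ hQkl
  have hsum : ∀ θ, ∑ t, ixTerm S γ (pf θ) (D t) = n * ixEst S γ (pf θ) D := fun θ => by
    rw [ixEst]; field_simp
  have hg₁ : ∀ θ, ∑ t, 2 * γ * (ixTerm S γ (pf θ) (D t) - pval S (pf θ)) =
      2 * s * (ixEst S γ (pf θ) D - pval S (pf θ)) := fun θ => by
    rw [← Finset.mul_sum, Finset.sum_sub_distrib, hsum, ← hγn]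
    simp only [Finset.sum_const, Finset.card_univ, Fintype.card_fin, nsmul_eq_mul]
    ring
  have hg₂ : ∀ θ, ∑ t, 2 * γ *
        (pval S (pf θ) - 2 * γ * covγ S γ (pf θ) - ixTerm S γ (pf θ) (D t)) =
      2 * s * (pval S (pf θ) - 2 * γ * covγ S γ (pf θ) - ixEst S γ (pf θ) D) := fun θ => by
    rw [← Finset.mul_sum, Finset.sum_sub_distrib, hsum, ← hγn]
    simp only [Finset.sum_const, Finset.card_univ, Fintype.card_fin, nsmul_eq_mul]
    ring
  simp only [hg₁, hg₂] at hD
  set B := (∑ t, |(D t).2.2| / γ) / n with hBdef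
  have hme := measurable_ixEst S γ hpfm D
  have hbe : ∀ θ, |ixEst S γ (pf θ) D| ≤ B := fun θ => abs_ixEst_le S hγ (hpf θ) D
  have hbv : ∀ θ, |pval S (pf θ)| ≤ 1 := fun θ => by
    have := pval_mem S (hpf θ)
    rw [abs_of_nonneg this.1]; exact this.2
  have hbc : ∀ θ, |covγ S γ (pf θ)| ≤ 1 / γ := fun θ => by
    have := covγ_mem S hγ (hpf θ)
    rw [abs_of_nonneg this.1]; exact this.2
  have hE₁ : Integrable
      (fun θ => Real.exp (2 * s * (ixEst S γ (pf θ) D - pval S (pf θ)))) P := by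
    refine integrable_exp_of_abs_le P ((hme.sub hmv).const_mul _) (B := 2 * s * (B + 1))
      fun θ => ?_
    rw [abs_mul, abs_of_pos (by positivity : 0 < 2 * s)]
    gcongr
    exact (abs_sub _ _).trans (add_le_add (hbe θ) (hbv θ))
  have hE₂ : Integrable (fun θ => Real.exp
      (2 * s * (pval S (pf θ) - 2 * γ * covγ S γ (pf θ) - ixEst S γ (pf θ) D))) P := by
    refine integrable_exp_of_abs_le P (((hmv.sub (hmc.const_mul _)).sub hme).const_mul _)
      (B := 2 * s * ((1 + 2 * γ * (1 / γ)) + B)) fun θ => ?_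
    rw [abs_mul, abs_of_pos (by positivity : 0 < 2 * s)]
    gcongr
    refine (abs_sub _ _).trans (add_le_add ((abs_sub _ _).trans (add_le_add (hbv θ) ?_)) (hbe θ))
    rw [abs_mul, abs_of_pos (by positivity : 0 < 2 * γ)]
    gcongr
    exact hbc θ
  rw [← ofReal_integral_eq_lintegral_ofReal hE₁ (ae_of_all _ fun θ => (Real.exp_pos _).le),
    ← ofReal_integral_eq_lintegral_ofReal hE₂ (ae_of_all _ fun θ => (Real.exp_pos _).le),
    ← ENNReal.ofReal_add (integral_nonneg fun θ => (Real.exp_pos _).le)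
      (integral_nonneg fun θ => (Real.exp_pos _).le),
    ENNReal.ofReal_lt_ofReal_iff (by positivity)] at hD
  have hlog := log_add_log_le (integral_exp_pos hE₁) (integral_exp_pos hE₂) hD
  have := hQhat_prob D
  have hQe := integrable_of_abs_le Q hme hbe
  have hQv := integrable_of_abs_le Q hmv hbv
  have hQc := integrable_of_abs_le Q hmc hbc
  have hQvc : Integrable (fun θ => pval S (pf θ) - 2 * γ * covγ S γ (pf θ)) Q :=
    hQv.sub (hQc.const_mul (2 * γ))
  have hHe := integrable_of_abs_le (Qhat D) hme hbe
  have hHv := integrable_of_abs_le (Qhat D) hmv hbv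
  have hDV₁ := integral_le_klReal_add_log (hQhat_kl D) ((hHe.sub hHv).const_mul (2 * s)) hE₁
  have hDV₂ := integral_le_klReal_add_log hQkl ((hQvc.sub hQe).const_mul (2 * s)) hE₂
  simp only [Pi.sub_apply] at hDV₁ hDV₂
  rw [integral_const_mul, integral_sub hHe hHv] at hDV₁
  rw [integral_const_mul, integral_sub hQvc hQe,
    integral_sub hQv (hQc.const_mul (2 * γ)), integral_const_mul] at hDV₂
  have hmax := hQhat_max D Q hQ hQkl
  rw [mul_assoc 2 γ, hγn] at hmax
  have hmax' := mul_le_mul_of_nonneg_left hmax (by positivity : 0 ≤ 2 * s)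
  rw [mul_sub, mul_sub, mul_div_cancel₀ _ (by positivity : 2 * s ≠ 0),
    mul_div_cancel₀ _ (by positivity : 2 * s ≠ 0)] at hmax'
  -- `hsγ` turns the coverage term `2 * s * (2 * γ * C)` into a multiple of `C`
  rw [le_div_iff₀ hs]
  linear_combination (1 / 2) * hDV₁ + (1 / 2) * hDV₂ + (1 / 2) * hmax' + (1 / 2) * hlog +
    2 * (∫ θ, covγ S γ (pf θ) ∂Q) * hsγ
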